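/- Let S be a nonempty finite state space, P_π an irreducible aperiodic row-stochastic transition matrix on S with stationary distribution d_π, D_π the diagonal matrix with diagonal d_π, X ∈ ℝ^{|S|×K} a feature matrix with full column rank, and γ ∈ [0,1) a discount factor. Then the matrix A := Xᵀ D_π (γP_π − I) X is negative definite: there exists η > 0 such that ⟨w, A w⟩ ≤ −η‖w‖₂² for all w ∈ ℝᴷ. -/

import Mathlib

/-!
Write `y = X w`. The quadratic form is `γ ∑ᵢⱼ dᵢ Pᵢⱼ yᵢ yⱼ - ∑ᵢ dᵢ yᵢ²`. Since
`yᵢ yⱼ ≤ (yᵢ² + yⱼ²) / 2`, stochasticity of the rows of `P` and stationarity of `d` bound the double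
sum by `∑ᵢ dᵢ yᵢ²` (`cross_term_le`), so the form is at most `-(1 - γ) ∑ᵢ dᵢ yᵢ²`.
Irreducibility makes `d` strictly positive (`stationary_pos`). Injectivity of `X` gives a left
inverse `Y`, and Cauchy-Schwarz applied to `w = Y y` with weights `d` bounds `w ⬝ᵥ w` by a
constant multiple of `∑ᵢ dᵢ yᵢ²` (`exists_weighted_bound`).
-/

open Finset Matrix

/-- The set of return times of state `i` under the stochastic matrix `P`. -/
def returnTimes {S : Type*} [Fintype S] [DecidableEq S] (P : Matrix S S ℝ) (i : S) : Set ℕ :=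
  {n | 1 ≤ n ∧ 0 < (P ^ n) i i}

lemma stationary_pow {S : Type*} [Fintype S] [DecidableEq S] (P : Matrix S S ℝ) (d : S → ℝ)
    (hdstat : ∀ j, ∑ i, d i * P i j = d j) (n : ℕ) : d ᵥ* (P ^ n) = d := by
  induction n with
  | zero => simp
  | succ n ih =>
    rw [pow_succ, ← Matrix.vecMul_vecMul, ih]
    funext j
    exact hdstat j

lemma pow_entry_nonneg {S : Type*} [Fintype S] [DecidableEq S] (P : Matrix S S ℝ)
    (hnonneg : ∀ i j, 0 ≤ P i j) (n : ℕ) : ∀ i j, 0 ≤ (P ^ n) i j := by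
  induction n with
  | zero =>
    intro i j
    rw [pow_zero, Matrix.one_apply]
    split_ifs <;> norm_num
  | succ n ih =>
    intro i j
    rw [pow_succ, Matrix.mul_apply]
    exact Finset.sum_nonneg fun k _ => mul_nonneg (ih i k) (hnonneg k j)

/-- Some state carries mass; irreducibility moves part of it to any other state. -/
lemma stationary_pos {S : Type*} [Fintype S] [DecidableEq S] (P : Matrix S S ℝ)
    (hnonneg : ∀ i j, 0 ≤ P i j) (hirr : ∀ i j, ∃ n : ℕ, 0 < (P ^ n) i j)
    (d : S → ℝ) (hdnonneg : ∀ s, 0 ≤ d s) (hdsum : ∑ s, d s = 1)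
    (hdstat : ∀ j, ∑ i, d i * P i j = d j) (s : S) : 0 < d s := by
  obtain ⟨i, -, hi⟩ : ∃ i ∈ Finset.univ, 0 < d i := by
    apply Finset.exists_lt_of_sum_lt
    simp [hdsum]
  obtain ⟨n, hn⟩ := hirr i s
  rw [← congrFun (stationary_pow P d hdstat n) s]
  exact Finset.sum_pos' (fun k _ => mul_nonneg (hdnonneg k) (pow_entry_nonneg P hnonneg n k s))
    ⟨i, Finset.mem_univ i, mul_pos hi hn⟩

lemma cross_term_le {S : Type*} [Fintype S] (P : Matrix S S ℝ)
    (hnonneg : ∀ i j, 0 ≤ P i j) (hrowsum : ∀ i, ∑ j, P i j = 1)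
    (d : S → ℝ) (hdnonneg : ∀ s, 0 ≤ d s) (hdstat : ∀ j, ∑ i, d i * P i j = d j) (y : S → ℝ) :
    ∑ i, ∑ j, d i * P i j * (y i * y j) ≤ ∑ i, d i * y i ^ 2 := by
  have hrow : ∑ i, ∑ j, d i * P i j * y i ^ 2 = ∑ i, d i * y i ^ 2 := by
    refine Finset.sum_congr rfl fun i _ => ?_
    rw [← Finset.sum_mul, ← Finset.mul_sum, hrowsum, mul_one]
  have hcol : ∑ i, ∑ j, d i * P i j * y j ^ 2 = ∑ j, d j * y j ^ 2 := by
    rw [Finset.sum_comm]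
    refine Finset.sum_congr rfl fun j _ => ?_
    rw [← Finset.sum_mul, hdstat]
  have hle : ∑ i, ∑ j, d i * P i j * (y i * y j) ≤
      ∑ i, ∑ j, (d i * P i j * y i ^ 2 + d i * P i j * y j ^ 2) / 2 := by
    refine Finset.sum_le_sum fun i _ => Finset.sum_le_sum fun j _ => ?_
    nlinarith [mul_nonneg (mul_nonneg (hdnonneg i) (hnonneg i j)) (sq_nonneg (y i - y j))]
  simp only [← Finset.sum_div, Finset.sum_add_distrib, hrow, hcol] at hle
  linarith

lemma exists_weighted_bound {S : Type*} [Fintype S] [DecidableEq S] {K : ℕ}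
    (d : S → ℝ) (hd : ∀ s, 0 < d s)
    (X : Matrix S (Fin K) ℝ) (hX : Function.Injective X.mulVec) :
    ∃ B : ℝ, 0 < B ∧ ∀ w : Fin K → ℝ, w ⬝ᵥ w ≤ B * ∑ s, d s * (X *ᵥ w) s ^ 2 := by
  obtain ⟨g, hg⟩ := X.mulVecLin.exists_leftInverse_of_injective (LinearMap.ker_eq_bot.mpr hX)
  obtain ⟨Y, hY⟩ : ∃ Y : Matrix (Fin K) S ℝ, ∀ w, Y *ᵥ (X *ᵥ w) = w :=
    ⟨LinearMap.toMatrix' g, fun w => by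
      rw [LinearMap.toMatrix'_mulVec]; exact LinearMap.congr_fun hg w⟩
  have hB : 0 ≤ ∑ k, ∑ s, Y k s ^ 2 / d s :=
    Finset.sum_nonneg fun k _ => Finset.sum_nonneg fun s _ => div_nonneg (sq_nonneg _) (hd s).le
  -- The summand `1` keeps the constant positive when `K = 0`.
  refine ⟨∑ k, ∑ s, Y k s ^ 2 / d s + 1, by linarith, fun w => ?_⟩
  set y := X *ᵥ w with hy
  have hw : w = Y *ᵥ y := (hY w).symm
  have hE : 0 ≤ ∑ s, d s * y s ^ 2 :=
    Finset.sum_nonneg fun s _ => mul_nonneg (hd s).le (sq_nonneg _)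
  have hk : ∀ k, w k * w k ≤ (∑ s, Y k s ^ 2 / d s) * ∑ s, d s * y s ^ 2 := by
    intro k
    have hwk : w k = ∑ s, Y k s * y s := congrFun hw k
    rw [← sq, hwk]
    refine Finset.sum_sq_le_sum_mul_sum_of_sq_le_mul _
      (fun s _ => div_nonneg (sq_nonneg _) (hd s).le)
      (fun s _ => mul_nonneg (hd s).le (sq_nonneg _)) fun s _ => le_of_eq ?_
    have := (hd s).ne'
    field_simp
  calc w ⬝ᵥ w ≤ ∑ k, (∑ s, Y k s ^ 2 / d s) * ∑ s, d s * y s ^ 2 :=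
        Finset.sum_le_sum fun k _ => hk k
    _ = (∑ k, ∑ s, Y k s ^ 2 / d s) * ∑ s, d s * y s ^ 2 := by rw [Finset.sum_mul]
    _ ≤ _ := by nlinarith

lemma quadratic_form_eq {S : Type*} [Fintype S] [DecidableEq S] {K : ℕ}
    (P : Matrix S S ℝ) (d : S → ℝ) (X : Matrix S (Fin K) ℝ) (γ : ℝ) (w : Fin K → ℝ) :
    w ⬝ᵥ (Xᵀ * Matrix.diagonal d * (γ • P - 1) * X).mulVec w =
      γ * ∑ i, ∑ j, d i * P i j * ((X *ᵥ w) i * (X *ᵥ w) j) - ∑ i, d i * (X *ᵥ w) i ^ 2 := by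
  simp only [← Matrix.mulVec_mulVec]
  rw [Matrix.dotProduct_mulVec, Matrix.vecMul_transpose]
  generalize X *ᵥ w = y
  rw [Finset.mul_sum, ← Finset.sum_sub_distrib]
  refine Finset.sum_congr rfl fun i _ => ?_
  have h : ∑ j, d i * P i j * (y i * y j) = d i * y i * (P *ᵥ y) i := by
    simp only [Matrix.mulVec, dotProduct, Finset.mul_sum]
    exact Finset.sum_congr rfl fun j _ => by ring
  rw [h, Matrix.mulVec_diagonal, Matrix.sub_mulVec, Matrix.smul_mulVec, Matrix.one_mulVec]
  simp only [Pi.sub_apply, Pi.smul_apply, smul_eq_mul]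
  ring

/-- The linear TD matrix `A = Xᵀ D_π (γ P_π − I) X` is negative definite, where `P_π`
is irreducible and aperiodic with stationary distribution `d_π`, `X` has full column
rank and `γ ∈ [0, 1)`. -/
theorem td_matrix_negative_definite
    {S : Type*} [Fintype S] [Nonempty S] [DecidableEq S] {K : ℕ}
    (P : Matrix S S ℝ)
    (hnonneg : ∀ i j, 0 ≤ P i j)
    (hrowsum : ∀ i, ∑ j, P i j = 1)
    (hirr : ∀ i j, ∃ n : ℕ, 0 < (P ^ n) i j)
    (haper : ∀ i, ∀ e : ℕ, (∀ n ∈ returnTimes P i, e ∣ n) → e = 1)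
    (d : S → ℝ) (hdnonneg : ∀ s, 0 ≤ d s) (hdsum : ∑ s, d s = 1)
    (hdstat : ∀ j, ∑ i, d i * P i j = d j)
    (X : Matrix S (Fin K) ℝ) (hX : Function.Injective X.mulVec)
    (γ : ℝ) (hγ0 : 0 ≤ γ) (hγ1 : γ < 1) :
    ∃ η > (0 : ℝ), ∀ w : Fin K → ℝ,
      w ⬝ᵥ (Xᵀ * Matrix.diagonal d * (γ • P - 1) * X).mulVec w ≤ -η * (w ⬝ᵥ w) := by
  obtain ⟨B, hB, hbound⟩ := exists_weighted_bound d
    (stationary_pos P hnonneg hirr d hdnonneg hdsum hdstat) X hX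
  refine ⟨(1 - γ) / B, div_pos (by linarith) hB, fun w => ?_⟩
  rw [quadratic_form_eq]
  have hcross := mul_le_mul_of_nonneg_left
    (cross_term_le P hnonneg hrowsum d hdnonneg hdstat (X *ᵥ w)) hγ0
  have hw : (1 - γ) / B * (w ⬝ᵥ w) ≤ (1 - γ) * ∑ s, d s * (X *ᵥ w) s ^ 2 := by
    rw [div_mul_eq_mul_div, div_le_iff₀ hB, mul_assoc, mul_comm _ B]
    exact mul_le_mul_of_nonneg_left (hbound w) (by linarith)
  linarith
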